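/- Let n ≥ 2 and a = (a_1,…,a_n), a' = (a'_1,…,a'_n) ∈ ℂ^n with every a_j and a'_k purely imaginary, and let s ∈ ℂ with Re(s) > 0. Then I_{n,n;a,a'}(s) = ∏_{1≤j≤n} ∏_{1≤k≤n} Γ_ℝ(s+a_j+a'_k). -/

import Mathlib

open MeasureTheory Complex

noncomputable section

/-- `Γ_ℝ(s) = π^{-s/2} Γ(s/2)`. -/
def GammaR (s : ℂ) : ℂ := (Real.pi : ℂ) ^ (-s / 2) * Complex.Gamma (s / 2)

/-- Modified Bessel function of the second kind, via its integral representation. -/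
def BesselK (ν : ℂ) (y : ℝ) : ℂ :=
  (1 / 2) * ∫ t in Set.Ioi (0 : ℝ),
    Complex.exp (-((y : ℂ) / 2) * ((t : ℂ) + 1 / (t : ℂ))) * (t : ℂ) ^ ν / (t : ℂ)

/-- Extend a finite real tuple to `ℕ`, defaulting to `1`. -/
def extR {k : ℕ} (t : Fin k → ℝ) : ℕ → ℝ := fun i => if h : i < k then t ⟨i, h⟩ else 1

/-- Extend a finite real tuple to `ℕ`, defaulting to `0`. -/
def extR0 {k : ℕ} (t : Fin k → ℝ) : ℕ → ℝ := fun i => if h : i < k then t ⟨i, h⟩ else 0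

/-- The positive orthant. -/
def posSet (k : ℕ) : Set (Fin k → ℝ) := {t | ∀ j, 0 < t j}

/-- `|a| = a_1 + ⋯ + a_n` (0-based indexing). -/
def sumA (n : ℕ) (a : ℕ → ℂ) : ℂ := ∑ j ∈ Finset.range n, a j

/-- `ã_j = a_{j+1} + a_1/(n-1)` (0-based indexing). -/
def tildeA (n : ℕ) (a : ℕ → ℂ) : ℕ → ℂ := fun j => a (j + 1) + a 0 / ((n : ℂ) - 1)

/-- The normalized radial part `Ŵ^A_{n,a}` of the class one `GL_n(ℝ)` Whittaker function,
as a function of `(y_1,…,y_{n-1})` (0-based indexing). -/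
def WhittAr : ℕ → (ℕ → ℂ) → (ℕ → ℝ) → ℂ
  | 0, _, _ => 1
  | 1, _, _ => 1
  | 2, a, y => 2 * ((y 0 : ℂ) ^ ((a 0 + a 1) / 2)) *
      BesselK ((a 0 - a 1) / 2) (2 * Real.pi * y 0)
  | (n + 3), a, y =>
      ∫ t in posSet (n + 2),
        WhittAr (n + 2) (tildeA (n + 3) a)
            (fun j => y (j + 1) * Real.sqrt (extR t (j + 1) / extR t j)) *
          (∏ j ∈ Finset.range (n + 2),
            Complex.exp (((-(Real.pi * y j) ^ 2 * extR t j - 1 / extR t j : ℝ) : ℂ)) *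
              ((Real.pi * y j : ℝ) : ℂ) ^ ((((n + 2 - j : ℕ) : ℂ) * a 0) / ((n + 2 : ℕ) : ℂ)) *
              ((extR t j : ℝ) : ℂ) ^ ((((n + 3 : ℕ) : ℂ) * a 0) / (2 * ((n + 2 : ℕ) : ℂ)))) *
          ((Real.pi * extR t (n + 1) : ℝ) : ℂ) ^ (-(sumA (n + 3) a) / 2) *
          (∏ j ∈ Finset.range (n + 2), ((extR t j : ℝ) : ℂ))⁻¹

/-- `Ŵ^A_{n,a}` as a function of the full tuple `(y_1,…,y_n)`. -/
def WhittAhat (n : ℕ) (a : ℕ → ℂ) (y : ℕ → ℝ) : ℂ :=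
  ((y (n - 1) : ℝ) : ℂ) ^ sumA n a * WhittAr n a y

/-- The Mellin transform `U_{n,a}` (0-based: `s j` stands for `s_{j+1}`). -/
def Ufun (n : ℕ) (a : ℕ → ℂ) (s : ℕ → ℂ) : ℂ :=
  ∫ y in posSet (n - 1),
    WhittAr n a (extR y) *
      ∏ j ∈ Finset.range (n - 1), ((extR y j : ℝ) : ℂ) ^ s j / ((extR y j : ℝ) : ℂ)

/-- The normalized radial part `Ŵ^B_{n,b}` of the class one `SO_{2n+1}(ℝ)` Whittaker function. -/
def WhittBr : ℕ → (ℕ → ℂ) → (ℕ → ℝ) → ℂ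
  | 0, _, _ => 1
  | 1, b, y => 2 * BesselK (b 0 / 2) (2 * Real.pi * y 0)
  | (n + 2), b, y =>
      ∫ p in (posSet (n + 2) ×ˢ posSet (n + 1)),
        WhittBr (n + 1) b
            (fun j =>
              if j < n then
                y (j + 1) *
                  Real.sqrt (extR p.1 (j + 1) * extR p.2 (j + 1) /
                    (extR p.1 (j + 2) * extR p.2 j))
              else y (n + 1) * Real.sqrt (extR p.1 (n + 1) / extR p.2 n)) *
          (∏ j ∈ Finset.range (n + 2),
            Complex.exp (((-(Real.pi * y j) ^ 2 * extR p.1 j - 1 / extR p.1 j : ℝ) : ℂ)) *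
              ((Real.pi * y j : ℝ) : ℂ) ^ b (n + 1)) *
          (∏ j ∈ Finset.range (n + 1),
            Complex.exp (((-(Real.pi * y j) ^ 2 * (extR p.1 j / extR p.1 (j + 1)) * extR p.2 j -
                  1 / extR p.2 j : ℝ) : ℂ)) *
              ((extR p.1 (j + 1) * extR p.2 j : ℝ) : ℂ) ^ (b (n + 1) / 2)) *
          ((extR p.1 0 : ℝ) : ℂ) ^ b (n + 1) *
          (∏ j ∈ Finset.range (n + 1), ((extR p.2 j : ℝ) : ℂ))⁻¹ *
          (∏ j ∈ Finset.range (n + 2), ((extR p.1 j : ℝ) : ℂ))⁻¹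

/-- The Mellin transform `V_{n,b}` (0-based: `s j` stands for `s_{j+1}`). -/
def Vfun (n : ℕ) (b : ℕ → ℂ) (s : ℕ → ℂ) : ℂ :=
  ∫ y in posSet n,
    WhittBr n b (extR y) *
      ∏ j ∈ Finset.range n, ((extR y j : ℝ) : ℂ) ^ s j / ((extR y j : ℝ) : ℂ)

/-- Integral over the vertical line `Re z = c`, i.e. `i·∫_ℝ f(c+it) dt`. -/
def VInt (c : ℝ) (f : ℂ → ℂ) : ℂ := Complex.I * ∫ t : ℝ, f (c + t * Complex.I)

/-- Iterated integral over `k` vertical lines with abscissas `c 0, …, c (k-1)`;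
the integrand is fed the contour points as a 0-based sequence. -/
def VIntK (k : ℕ) (c : ℕ → ℝ) (f : (ℕ → ℂ) → ℂ) : ℂ :=
  Complex.I ^ k * ∫ t : Fin k → ℝ, f (fun i => (c i : ℂ) + (extR0 t i : ℝ) * Complex.I)



/-- The archimedean `GL_n × GL_n` zeta integral in torus coordinates. -/
def zetaGLGL (n : ℕ) (a a' : ℕ → ℂ) (s : ℂ) : ℂ :=
  (2 : ℂ) ^ n * ∫ y in posSet n,
    Complex.exp (((-(Real.pi * extR y (n - 1) ^ 2) : ℝ) : ℂ)) *
      WhittAhat n a (extR y) * WhittAhat n a' (extR y) *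
      ∏ j ∈ Finset.range n,
        ((extR y j : ℝ) : ℂ) ^ (((j + 1 : ℕ) : ℂ) * s) / ((extR y j : ℝ) : ℂ)

/-! In the coordinates `y_j = exp((u_j - u_{j+1})/2)`, `y_n = exp(u_n/2)`, the Whittaker function
is Givental's integral, which builds it from `GL_1` by one kernel per rank. The dual Baxter operator
intertwines these kernels up to a factor `Γ_ℝ`, by an explicit change of variables that exchanges
the two exponentials in each variable of the potential. Hence Whittaker functions are
eigenfunctions of the Baxter operator, with eigenvalue `∏ j, Γ_ℝ(a_j + c)`.

The factor `exp(-π y_n²)` turns a Givental kernel into a Baxter kernel. Unfolding one of the two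
Whittaker functions by one rank therefore reduces the `GL_{m+1} × GL_{m+1}` integral to the
`GL_{m+1} × GL_m` one, and that one to `GL_m × GL_m`, each time splitting off an eigenvalue. The
same computation with absolute values inside all integrals provides the convergence that the
exchanges of integration require. -/

section Fubini

variable {X Y : Type*} [MeasurableSpace X] [MeasurableSpace Y] {μ : Measure X} {ν : Measure Y}
  [SFinite μ] [SFinite ν]

theorem lintegral_mul_lintegral_swap {f : X → ENNReal} {K : X → Y → ENNReal} {g : Y → ENNReal}
    (hf : Measurable f) (hK : Measurable (Function.uncurry K)) (hg : Measurable g) :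
    ∫⁻ x, f x * ∫⁻ y, K x y * g y ∂ν ∂μ = ∫⁻ y, (∫⁻ x, f x * K x y ∂μ) * g y ∂ν := by
  have hK' : Measurable fun p : X × Y => K p.1 p.2 := hK
  calc
    _ = ∫⁻ x, ∫⁻ y, f x * K x y * g y ∂ν ∂μ := by
      refine lintegral_congr fun x => ?_
      rw [← lintegral_const_mul _ (by fun_prop)]
      simp only [mul_assoc]
    _ = ∫⁻ y, ∫⁻ x, f x * K x y * g y ∂μ ∂ν := lintegral_lintegral_swap (by fun_prop)
    _ = _ := lintegral_congr fun y => lintegral_mul_const _ (by fun_prop)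

theorem integral_mul_integral_swap {𝕜 : Type*} [RCLike 𝕜] {f : X → 𝕜} {K : X → Y → 𝕜} {g : Y → 𝕜}
    {F : X → ENNReal} {G : Y → ENNReal} (hf : Measurable f) (hK : Measurable (Function.uncurry K))
    (hg : Measurable g) (hfF : ∀ x, ‖f x‖ₑ ≤ F x) (hgG : ∀ y, ‖g y‖ₑ ≤ G y)
    (hfin : ∫⁻ x, F x * ∫⁻ y, ‖K x y‖ₑ * G y ∂ν ∂μ < ⊤) :
    ∫ x, f x * ∫ y, K x y * g y ∂ν ∂μ = ∫ y, (∫ x, f x * K x y ∂μ) * g y ∂ν := by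
  have hK' : Measurable fun p : X × Y => K p.1 p.2 := hK
  have hm : Measurable fun p : X × Y => f p.1 * K p.1 p.2 * g p.2 := by fun_prop
  have hint : Integrable (fun p : X × Y => f p.1 * K p.1 p.2 * g p.2) (μ.prod ν) := by
    refine ⟨hm.aestronglyMeasurable, ?_⟩
    rw [HasFiniteIntegral, lintegral_prod _ hm.enorm.aemeasurable]
    refine (lintegral_mono fun x => ?_).trans_lt hfin
    simp only [enorm_mul, mul_assoc]
    rw [lintegral_const_mul _ (by fun_prop)]
    gcongr
    exacts [hfF x, hgG _]
  calc
    _ = ∫ x, ∫ y, f x * K x y * g y ∂ν ∂μ := by simp only [← integral_const_mul, mul_assoc]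
    _ = ∫ y, ∫ x, f x * K x y * g y ∂μ ∂ν := integral_integral_swap hint
    _ = _ := by simp only [integral_mul_const]

end Fubini

theorem ofReal_exp_cpow (x : ℝ) (w : ℂ) : ((Real.exp x : ℝ) : ℂ) ^ w = cexp (w * x) := by
  rw [cpow_def_of_ne_zero (by simp), ← ofReal_log (Real.exp_pos x).le, Real.log_exp, mul_comm]

theorem integral_Ioi_eq_integral_exp_smul {E : Type*} [NormedAddCommGroup E] [NormedSpace ℝ E]
    (f : ℝ → E) :
    ∫ t in Set.Ioi (0 : ℝ), f t = ∫ u : ℝ, Real.exp u • f (Real.exp u) := by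
  simpa [Set.image_univ, Real.range_exp] using
    integral_image_eq_integral_abs_deriv_smul MeasurableSet.univ
      (fun x _ => (Real.hasDerivAt_exp x).hasDerivWithinAt) Real.exp_injective.injOn f

/-- The integrand of `Γ_ℝ(w) = ∫ exp(wt/2 - πe^t) dt`, Euler's integral in the variable
`t = log x`. -/
def gammaKernel (w : ℂ) (t : ℝ) : ℂ := cexp (w / 2 * t - (Real.pi * Real.exp t : ℝ))

@[fun_prop]
theorem measurable_gammaKernel (w : ℂ) : Measurable (gammaKernel w) := by
  unfold gammaKernel
  fun_prop

theorem integral_gammaKernel {w : ℂ} (hw : 0 < w.re) : ∫ t, gammaKernel w t = GammaR w := by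
  have hw2 : 0 < (w / 2).re := by rw [div_ofNat_re]; positivity
  have hpi : (1 / (Real.pi : ℂ)) ^ (w / 2) = (Real.pi : ℂ) ^ (-w / 2) := by
    rw [one_div, inv_cpow, neg_div, cpow_neg]
    rw [arg_ofReal_of_nonneg Real.pi_pos.le]
    exact Real.pi_ne_zero.symm
  rw [GammaR, ← hpi, ← integral_cpow_mul_exp_neg_mul_Ioi hw2 (by simpa using Real.pi_pos),
    integral_Ioi_eq_integral_exp_smul]
  refine integral_congr_ae (.of_forall fun t => ?_)
  simp only [gammaKernel, real_smul, ofReal_exp_cpow]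
  rw [ofReal_exp, ← Complex.exp_add, ← Complex.exp_add]
  push_cast
  ring_nf

theorem integrable_gammaKernel {w : ℂ} (hw : 0 < w.re) : Integrable (gammaKernel w) := by
  by_contra h
  exact Gammaℝ_ne_zero_of_re_pos hw ((integral_gammaKernel hw).symm.trans (integral_undef h))

theorem prod_lintegral_gammaKernel_lt_top {n : ℕ} {w : ℕ → ℂ} (hw : ∀ j < n, 0 < (w j).re) :
    ∏ j ∈ Finset.range n, ∫⁻ t, ‖gammaKernel (w j) t‖ₑ < ⊤ :=
  ENNReal.prod_lt_top fun j hj => (integrable_gammaKernel (hw j (Finset.mem_range.1 hj))).2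

/-! ### Givental and Baxter kernels -/

/-- The coordinates `exp(-x_j)`, extended by the convention `x_m = ∞`. -/
def expNegExt {m : ℕ} (x : Fin m → ℝ) : Fin (m + 1) → ℝ :=
  Fin.snoc (α := fun _ => ℝ) (fun j => Real.exp (-x j)) 0

/-- The Toda potential between two consecutive rows of a Givental array. -/
def giventalPotential {m : ℕ} (u : Fin (m + 1) → ℝ) (x : Fin m → ℝ) : ℝ :=
  ∑ j, (Real.exp (u j.castSucc - x j) + Real.exp (x j - u j.succ))

/-- The Toda potential between two rows of equal length; the last term has no second half. -/
def baxterPotential {m : ℕ} (y x : Fin m → ℝ) : ℝ :=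
  ∑ j, (Real.exp (x j - y j) + expNegExt x j.succ * Real.exp (y j))

/-- The kernel raising a `GL_m` Whittaker function to `GL_{m+1}` in Givental's recursion, with
spectral parameter `b`. -/
def giventalKernel {m : ℕ} (b : ℂ) (u : Fin (m + 1) → ℝ) (x : Fin m → ℝ) : ℂ :=
  cexp (b / 2 * (∑ j, u j - ∑ j, x j : ℝ) - (Real.pi * giventalPotential u x : ℝ))

/-- The kernel of the dual Baxter operator, of which the `GL_m` Whittaker functions are
eigenfunctions. -/
def baxterKernel {m : ℕ} (c : ℂ) (y x : Fin m → ℝ) : ℂ :=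
  cexp (c / 2 * (∑ j, x j - ∑ j, y j : ℝ) - (Real.pi * baxterPotential y x : ℝ))

@[simp]
theorem expNegExt_castSucc {m : ℕ} (x : Fin m → ℝ) (j : Fin m) :
    expNegExt x j.castSucc = Real.exp (-x j) := by
  simp [expNegExt]

@[simp]
theorem expNegExt_last {m : ℕ} (x : Fin m → ℝ) : expNegExt x (Fin.last m) = 0 := by
  simp [expNegExt]

theorem expNegExt_nonneg {m : ℕ} (x : Fin m → ℝ) (j : Fin (m + 1)) : 0 ≤ expNegExt x j := by
  refine Fin.lastCases ?_ (fun i => ?_) j <;> simp [Real.exp_nonneg]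

@[fun_prop]
theorem measurable_expNegExt_apply {m : ℕ} (j : Fin (m + 1)) :
    Measurable fun x : Fin m → ℝ => expNegExt x j := by
  refine Fin.lastCases ?_ (fun i => ?_) j <;> simp only [expNegExt_castSucc, expNegExt_last] <;>
    fun_prop

section Measurability

variable {X : Type*} [MeasurableSpace X] {m : ℕ}

@[fun_prop]
theorem measurable_giventalKernel (b : ℂ) {u : X → Fin (m + 1) → ℝ} {x : X → Fin m → ℝ}
    (hu : Measurable u) (hx : Measurable x) :
    Measurable fun p => giventalKernel b (u p) (x p) := by
  unfold giventalKernel giventalPotential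
  fun_prop

@[fun_prop]
theorem measurable_baxterKernel (c : ℂ) {y x : X → Fin m → ℝ}
    (hy : Measurable y) (hx : Measurable x) :
    Measurable fun p => baxterKernel c (y p) (x p) := by
  unfold baxterKernel baxterPotential
  fun_prop

end Measurability

theorem sum_expNegExt_succ_mul_exp {m : ℕ} (v u : Fin (m + 1) → ℝ) :
    ∑ j : Fin (m + 1), expNegExt u j.succ * Real.exp (v j) =
      ∑ j : Fin m, Real.exp (v j.castSucc - u j.succ) := by
  rw [Fin.sum_univ_castSucc]
  simp [Fin.succ_castSucc, -Fin.castSucc_succ, ← Real.exp_add, neg_add_eq_sub]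

/-! ### The intertwining relation -/

section Intertwining

variable {m : ℕ} (v : Fin (m + 1) → ℝ) (x : Fin m → ℝ)

/-- The coefficient of `exp(u_j)` in the potential of
`baxterKernel c v u * giventalKernel b u x`. -/
def upCoeff (j : Fin (m + 1)) : ℝ := Real.exp (-v j) + expNegExt x j

/-- The coefficient of `exp(-u_{j+1})` in the potential of
`baxterKernel c v u * giventalKernel b u x`. -/
def downCoeff (j : Fin m) : ℝ := Real.exp (v j.castSucc) + Real.exp (x j)

/-- The change of variables behind the intertwining relation: `u_0` is the translate of `t` that
makes its coefficient in the potential `1`, and `y_j ↦ u_{j+1}` is the reflection exchanging the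
two exponentials of the potential. -/
def interchange : ℝ × (Fin m → ℝ) ≃ᵐ (Fin (m + 1) → ℝ) :=
  ((MeasurableEquiv.subRight (Real.log (upCoeff v x 0))).prodCongr
    (MeasurableEquiv.subLeft fun j : Fin m =>
      Real.log (downCoeff v x j) - Real.log (upCoeff v x j.succ))).trans
    (MeasurableEquiv.piFinSuccAbove (fun _ => ℝ) 0).symm

theorem interchange_zero (p : ℝ × (Fin m → ℝ)) :
    interchange v x p 0 = p.1 - Real.log (upCoeff v x 0) := rfl

theorem interchange_succ (p : ℝ × (Fin m → ℝ)) (j : Fin m) :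
    interchange v x p j.succ =
      Real.log (downCoeff v x j) - Real.log (upCoeff v x j.succ) - p.2 j := rfl

theorem measurePreserving_interchange : MeasurePreserving (interchange v x) :=
  (volume_preserving_piFinSuccAbove (fun _ => ℝ) 0).symm.comp
    ((measurePreserving_sub_right volume _).prod (volume.measurePreserving_sub_left _))

theorem upCoeff_pos (j : Fin (m + 1)) : 0 < upCoeff v x j :=
  add_pos_of_pos_of_nonneg (Real.exp_pos _) (expNegExt_nonneg _ _)

theorem downCoeff_pos (j : Fin m) : 0 < downCoeff v x j :=
  add_pos (Real.exp_pos _) (Real.exp_pos _)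

theorem upCoeff_zero_mul_exp_interchange (p : ℝ × (Fin m → ℝ)) :
    upCoeff v x 0 * Real.exp (interchange v x p 0) = Real.exp p.1 := by
  rw [interchange_zero, Real.exp_sub, Real.exp_log (upCoeff_pos v x 0),
    mul_div_cancel₀ _ (upCoeff_pos v x 0).ne']

theorem upCoeff_succ_mul_exp_interchange (p : ℝ × (Fin m → ℝ)) (j : Fin m) :
    upCoeff v x j.succ * Real.exp (interchange v x p j.succ) =
      downCoeff v x j * Real.exp (-p.2 j) := by
  have := (upCoeff_pos v x j.succ).ne'
  rw [interchange_succ, sub_eq_add_neg _ (p.2 j), Real.exp_add, Real.exp_sub,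
    Real.exp_log (downCoeff_pos v x j), Real.exp_log (upCoeff_pos v x j.succ)]
  field_simp

theorem downCoeff_mul_exp_neg_interchange (p : ℝ × (Fin m → ℝ)) (j : Fin m) :
    downCoeff v x j * Real.exp (-interchange v x p j.succ) =
      upCoeff v x j.succ * Real.exp (p.2 j) := by
  have := (downCoeff_pos v x j).ne'
  rw [interchange_succ, neg_sub, sub_eq_add_neg, neg_sub, Real.exp_add, Real.exp_sub,
    Real.exp_log (downCoeff_pos v x j), Real.exp_log (upCoeff_pos v x j.succ)]
  field_simp

theorem sum_log_upCoeff :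
    ∑ j, Real.log (upCoeff v x j) =
      ∑ j, Real.log (downCoeff v x j) - ∑ j, v j - ∑ j, x j := by
  have h_castSucc (j : Fin m) : Real.log (upCoeff v x j.castSucc) =
      Real.log (downCoeff v x j) - v j.castSucc - x j := by
    have h : upCoeff v x j.castSucc = downCoeff v x j * Real.exp (-v j.castSucc - x j) := by
      rw [upCoeff, downCoeff, expNegExt_castSucc, add_mul, ← Real.exp_add, ← Real.exp_add]
      ring_nf
    rw [h, Real.log_mul (downCoeff_pos v x j).ne' (Real.exp_ne_zero _), Real.log_exp]
    ring
  have h_last : Real.log (upCoeff v x (Fin.last m)) = -v (Fin.last m) := by simp [upCoeff]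
  rw [Fin.sum_univ_castSucc, Fin.sum_univ_castSucc (f := v), h_last]
  simp only [h_castSucc, Finset.sum_sub_distrib]
  ring

theorem sum_interchange (p : ℝ × (Fin m → ℝ)) :
    ∑ j, interchange v x p j = p.1 + ∑ j, v j + ∑ j, x j - ∑ j, p.2 j := by
  have h := sum_log_upCoeff v x
  rw [Fin.sum_univ_succ] at h ⊢
  simp only [interchange_zero, interchange_succ, Finset.sum_sub_distrib]
  linarith

theorem baxterPotential_add_giventalPotential (u : Fin (m + 1) → ℝ) :
    baxterPotential v u + giventalPotential u x =
      ∑ j, upCoeff v x j * Real.exp (u j) + ∑ j, downCoeff v x j * Real.exp (-u j.succ) := by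
  have h_up : ∑ j, upCoeff v x j * Real.exp (u j) =
      ∑ j, Real.exp (u j - v j) + ∑ j : Fin m, Real.exp (u j.castSucc - x j) := by
    simp only [upCoeff, add_mul, Finset.sum_add_distrib, ← Real.exp_add, neg_add_eq_sub]
    rw [Fin.sum_univ_castSucc (f := fun j => expNegExt x j * _)]
    simp [← Real.exp_add, neg_add_eq_sub]
  have h_down : ∑ j, downCoeff v x j * Real.exp (-u j.succ) =
      ∑ j : Fin m, Real.exp (v j.castSucc - u j.succ) + ∑ j, Real.exp (x j - u j.succ) := by
    simp [downCoeff, add_mul, Finset.sum_add_distrib, ← Real.exp_add, sub_eq_add_neg]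
  rw [h_up, h_down, baxterPotential, giventalPotential, Finset.sum_add_distrib,
    Finset.sum_add_distrib, sum_expNegExt_succ_mul_exp]
  ring

theorem giventalPotential_add_baxterPotential (y : Fin m → ℝ) :
    giventalPotential v y + baxterPotential y x =
      ∑ j, (upCoeff v x j.succ * Real.exp (y j) + downCoeff v x j * Real.exp (-y j)) := by
  rw [giventalPotential, baxterPotential, ← Finset.sum_add_distrib]
  refine Finset.sum_congr rfl fun j _ => ?_
  simp only [upCoeff, downCoeff, add_mul, sub_eq_add_neg, Real.exp_add]
  ring

theorem potential_interchange (p : ℝ × (Fin m → ℝ)) :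
    baxterPotential v (interchange v x p) + giventalPotential (interchange v x p) x =
      Real.exp p.1 + (giventalPotential v p.2 + baxterPotential p.2 x) := by
  rw [baxterPotential_add_giventalPotential, giventalPotential_add_baxterPotential,
    Fin.sum_univ_succ, upCoeff_zero_mul_exp_interchange, Finset.sum_add_distrib]
  simp only [upCoeff_succ_mul_exp_interchange, downCoeff_mul_exp_neg_interchange]
  ring

theorem baxterKernel_mul_giventalKernel_interchange (b c : ℂ) (p : ℝ × (Fin m → ℝ)) :
    baxterKernel c v (interchange v x p) * giventalKernel b (interchange v x p) x =
      gammaKernel (b + c) p.1 * (giventalKernel b v p.2 * baxterKernel c p.2 x) := by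
  have h := congrArg ((↑) : ℝ → ℂ) (potential_interchange v x p)
  simp only [baxterKernel, giventalKernel, gammaKernel, sum_interchange, ← Complex.exp_add]
  congr 1
  push_cast at h ⊢
  linear_combination -(Real.pi : ℂ) * h

theorem integral_baxterKernel_mul_giventalKernel (b c : ℂ) :
    ∫ u, baxterKernel c v u * giventalKernel b u x =
      (∫ t, gammaKernel (b + c) t) * ∫ y, giventalKernel b v y * baxterKernel c y x := by
  rw [← (measurePreserving_interchange v x).integral_comp (interchange v x).measurableEmbedding]
  simp only [baxterKernel_mul_giventalKernel_interchange]
  exact integral_prod_mul (gammaKernel (b + c)) fun y => giventalKernel b v y * baxterKernel c y x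

theorem lintegral_baxterKernel_mul_giventalKernel (b c : ℂ) :
    ∫⁻ u, ‖baxterKernel c v u‖ₑ * ‖giventalKernel b u x‖ₑ =
      (∫⁻ t, ‖gammaKernel (b + c) t‖ₑ) * ∫⁻ y, ‖giventalKernel b v y‖ₑ * ‖baxterKernel c y x‖ₑ := by
  rw [← (measurePreserving_interchange v x).lintegral_comp_emb
    (interchange v x).measurableEmbedding]
  simp only [← enorm_mul, baxterKernel_mul_giventalKernel_interchange]
  simp only [enorm_mul]
  exact lintegral_prod_mul (f := fun t => ‖gammaKernel (b + c) t‖ₑ)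
    (g := fun y => ‖giventalKernel b v y‖ₑ * ‖baxterKernel c y x‖ₑ) (by fun_prop) (by fun_prop)

end Intertwining

/-! ### Givental's function -/

/-- Givental's integral for the class one `GL_n` Whittaker function with parameter `a`, in the
coordinates `u` with `y_j = exp((u_j - u_{j+1})/2)` for `j < n` and `y_n = exp(u_n/2)`. -/
def givental : (n : ℕ) → (ℕ → ℂ) → (Fin n → ℝ) → ℂ
  | 0, _, _ => 1
  | n + 1, a, u => ∫ x : Fin n → ℝ, giventalKernel (a 0) u x * givental n (fun j => a (j + 1)) x

/-- Givental's integral with the absolute value taken inside all integrals, which controls the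
exchanges of integration. -/
def giventalAbs : (n : ℕ) → (ℕ → ℂ) → (Fin n → ℝ) → ENNReal
  | 0, _, _ => 1
  | n + 1, a, u =>
      ∫⁻ x : Fin n → ℝ, ‖giventalKernel (a 0) u x‖ₑ * giventalAbs n (fun j => a (j + 1)) x

theorem enorm_givental_le (n : ℕ) (a : ℕ → ℂ) (u : Fin n → ℝ) :
    ‖givental n a u‖ₑ ≤ giventalAbs n a u := by
  induction n generalizing a with
  | zero => simp [givental, giventalAbs]
  | succ n ih =>
    refine (enorm_integral_le_lintegral_enorm _).trans (lintegral_mono fun x => ?_)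
    rw [enorm_mul]
    gcongr
    exact ih _ x

@[fun_prop]
theorem measurable_givental (n : ℕ) (a : ℕ → ℂ) : Measurable (givental n a) := by
  induction n generalizing a with
  | zero => exact measurable_const
  | succ n ih =>
    have h : Measurable fun p : (Fin (n + 1) → ℝ) × (Fin n → ℝ) =>
        giventalKernel (a 0) p.1 p.2 * givental n (fun j => a (j + 1)) p.2 := by fun_prop
    exact h.stronglyMeasurable.integral_prod_right'.measurable

@[fun_prop]
theorem measurable_giventalAbs (n : ℕ) (a : ℕ → ℂ) : Measurable (giventalAbs n a) := by
  induction n generalizing a with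
  | zero => exact measurable_const
  | succ n ih =>
    have h : Measurable fun p : (Fin (n + 1) → ℝ) × (Fin n → ℝ) =>
        ‖giventalKernel (a 0) p.1 p.2‖ₑ * giventalAbs n (fun j => a (j + 1)) p.2 := by fun_prop
    exact h.lintegral_prod_right'

theorem ae_giventalAbs_lt_top {n : ℕ} {a : ℕ → ℂ} {v : Fin (n + 1) → ℝ}
    (hv : giventalAbs (n + 1) a v < ⊤) :
    ∀ᵐ y, giventalAbs n (fun j => a (j + 1)) y < ⊤ := by
  filter_upwards [ae_lt_top (by fun_prop) hv.ne] with y hy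
  exact ENNReal.lt_top_of_mul_ne_top_right hy.ne (by simp [giventalKernel])

/-! ### The Baxter eigenvalue -/

theorem lintegral_baxterKernel_mul_giventalAbs (n : ℕ) (a : ℕ → ℂ) (c : ℂ) (v : Fin n → ℝ) :
    ∫⁻ u, ‖baxterKernel c v u‖ₑ * giventalAbs n a u =
      (∏ j ∈ Finset.range n, ∫⁻ t, ‖gammaKernel (a j + c) t‖ₑ) * giventalAbs n a v := by
  induction n generalizing a with
  | zero => simp [giventalAbs, baxterKernel, baxterPotential, volume_pi]
  | succ n ih =>
    set Γ := ∫⁻ t, ‖gammaKernel (a 0 + c) t‖ₑ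
    set P := ∏ j ∈ Finset.range n, ∫⁻ t, ‖gammaKernel (a (j + 1) + c) t‖ₑ with hP
    set g := giventalAbs n fun j => a (j + 1) with hg
    have hgm : Measurable g := measurable_giventalAbs _ _
    calc
      _ = ∫⁻ x, (∫⁻ u, ‖baxterKernel c v u‖ₑ * ‖giventalKernel (a 0) u x‖ₑ) * g x :=
        lintegral_mul_lintegral_swap (by fun_prop) (by unfold Function.uncurry; fun_prop) hgm
      _ = Γ * ∫⁻ x, (∫⁻ y, ‖giventalKernel (a 0) v y‖ₑ * ‖baxterKernel c y x‖ₑ) * g x := by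
        have hm : Measurable fun x =>
            ∫⁻ y, ‖giventalKernel (a 0) v y‖ₑ * ‖baxterKernel c y x‖ₑ :=
          Measurable.lintegral_prod_right' (f := fun p : (Fin n → ℝ) × (Fin n → ℝ) =>
            ‖giventalKernel (a 0) v p.2‖ₑ * ‖baxterKernel c p.2 p.1‖ₑ) (by fun_prop)
        simp only [lintegral_baxterKernel_mul_giventalKernel, mul_assoc]
        exact lintegral_const_mul _ (hm.mul hgm)
      _ = Γ * ∫⁻ y, ‖giventalKernel (a 0) v y‖ₑ * ∫⁻ x, ‖baxterKernel c y x‖ₑ * g x := by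
        rw [lintegral_mul_lintegral_swap (by fun_prop) (by unfold Function.uncurry; fun_prop) hgm]
      _ = Γ * (P * ∫⁻ y, ‖giventalKernel (a 0) v y‖ₑ * g y) := by
        simp only [hg, ih, ← hP, mul_left_comm ‖giventalKernel _ _ _‖ₑ]
        rw [lintegral_const_mul _ (by fun_prop)]
      _ = _ := by rw [Finset.prod_range_succ', giventalAbs, ← hP, mul_left_comm, mul_assoc]

theorem integral_baxterKernel_mul_givental {n : ℕ} {a : ℕ → ℂ} {c : ℂ} {v : Fin n → ℝ}
    (hac : ∀ j < n, 0 < (a j + c).re) (hv : giventalAbs n a v < ⊤) :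
    ∫ u, baxterKernel c v u * givental n a u =
      (∏ j ∈ Finset.range n, GammaR (a j + c)) * givental n a v := by
  induction n generalizing a with
  | zero => simp [givental, baxterKernel, baxterPotential, volume_pi, Measure.real]
  | succ n ih =>
    have hac_tail : ∀ j < n, 0 < (a (j + 1) + c).re := fun j hj => hac (j + 1) (by omega)
    set P := ∏ j ∈ Finset.range n, GammaR (a (j + 1) + c) with hP
    set g := givental n fun j => a (j + 1) with hg
    have hgm : Measurable g := measurable_givental _ _
    have hfin₁ : ∫⁻ u, ‖baxterKernel c v u‖ₑ * giventalAbs (n + 1) a u < ⊤ := by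
      rw [lintegral_baxterKernel_mul_giventalAbs]
      exact ENNReal.mul_lt_top (prod_lintegral_gammaKernel_lt_top hac) hv
    have hfin₂ : ∫⁻ y, ‖giventalKernel (a 0) v y‖ₑ *
        ∫⁻ x, ‖baxterKernel c y x‖ₑ * giventalAbs n (fun j => a (j + 1)) x < ⊤ := by
      simp only [lintegral_baxterKernel_mul_giventalAbs, mul_left_comm ‖giventalKernel _ _ _‖ₑ]
      rw [lintegral_const_mul _ (by fun_prop)]
      exact ENNReal.mul_lt_top (prod_lintegral_gammaKernel_lt_top hac_tail) hv
    calc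
      _ = ∫ x, (∫ u, baxterKernel c v u * giventalKernel (a 0) u x) * g x :=
        integral_mul_integral_swap (by fun_prop) (by unfold Function.uncurry; fun_prop) hgm
          (fun _ => le_rfl) (enorm_givental_le _ _) hfin₁
      _ = GammaR (a 0 + c) *
          ∫ x, (∫ y, giventalKernel (a 0) v y * baxterKernel c y x) * g x := by
        simp only [integral_baxterKernel_mul_giventalKernel,
          integral_gammaKernel (hac 0 n.succ_pos), mul_assoc, integral_const_mul]
      _ = GammaR (a 0 + c) *
          ∫ y, giventalKernel (a 0) v y * ∫ x, baxterKernel c y x * g x := by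
        rw [integral_mul_integral_swap (by fun_prop) (by unfold Function.uncurry; fun_prop) hgm
          (fun _ => le_rfl) (enorm_givental_le _ _) hfin₂]
      _ = GammaR (a 0 + c) * ∫ y, P * (giventalKernel (a 0) v y * g y) := by
        congr 1
        refine integral_congr_ae ?_
        filter_upwards [ae_giventalAbs_lt_top hv] with y hy
        rw [hg, ih hac_tail hy, ← hP, mul_left_comm]
      _ = _ := by
        rw [integral_const_mul, Finset.prod_range_succ', givental, ← mul_assoc, mul_comm _ P]

section Adjoint

variable {Y : Type*} [MeasurableSpace Y] {ν : Measure Y} [SFinite ν] {n : ℕ} {a : ℕ → ℂ} {c : ℂ}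
  {φ : Y → Fin n → ℝ} {G : Y → ENNReal}

theorem lintegral_giventalAbs_mul_lintegral_baxterKernel (hφ : Measurable φ) (hG : Measurable G) :
    ∫⁻ u, giventalAbs n a u * ∫⁻ y, ‖baxterKernel c (φ y) u‖ₑ * G y ∂ν =
      (∏ j ∈ Finset.range n, ∫⁻ t, ‖gammaKernel (a j + c) t‖ₑ) *
        ∫⁻ y, giventalAbs n a (φ y) * G y ∂ν := by
  rw [lintegral_mul_lintegral_swap (by fun_prop) (by unfold Function.uncurry; fun_prop) hG,
    ← lintegral_const_mul _ (by fun_prop)]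
  simp only [mul_comm (giventalAbs n a _) ‖_‖ₑ, lintegral_baxterKernel_mul_giventalAbs, mul_assoc]

theorem integral_givental_mul_integral_baxterKernel {g : Y → ℂ} (hφ : Measurable φ)
    (hg : Measurable g) (hG : Measurable G) (hgG : ∀ y, ‖g y‖ₑ ≤ G y)
    (hac : ∀ j < n, 0 < (a j + c).re) (hfin : ∫⁻ y, giventalAbs n a (φ y) * G y ∂ν < ⊤) :
    ∫ u, givental n a u * ∫ y, baxterKernel c (φ y) u * g y ∂ν =
      (∏ j ∈ Finset.range n, GammaR (a j + c)) * ∫ y, givental n a (φ y) * g y ∂ν := by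
  have hfin_swap : ∫⁻ u, giventalAbs n a u * ∫⁻ y, ‖baxterKernel c (φ y) u‖ₑ * G y ∂ν < ⊤ := by
    rw [lintegral_giventalAbs_mul_lintegral_baxterKernel hφ hG]
    exact ENNReal.mul_lt_top (prod_lintegral_gammaKernel_lt_top hac) hfin
  rw [integral_mul_integral_swap (by fun_prop) (by unfold Function.uncurry; fun_prop) hg
    (enorm_givental_le n a) hgG hfin_swap, ← integral_const_mul]
  refine integral_congr_ae ?_
  filter_upwards [ae_lt_top (by fun_prop) hfin.ne] with y hy
  rcases eq_or_ne (G y) 0 with hGy | hGy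
  · have hgy : g y = 0 := by simpa [hGy] using hgG y
    simp [hgy]
  · have hφy := ENNReal.lt_top_of_mul_ne_top_left hy.ne hGy
    simp only [mul_comm (givental n a _) (baxterKernel _ _ _),
      integral_baxterKernel_mul_givental hac hφy, mul_assoc]

end Adjoint

/-! ### Pairings of Whittaker functions -/

/-- The factor `exp(-π y_{m+1}²)` of the zeta integrand, with `y_{m+1} = exp(u_{m+1}/2)`. -/
def lastWeight {m : ℕ} (u : Fin (m + 1) → ℝ) : ℂ :=
  cexp (-(Real.pi * Real.exp (u (Fin.last m)) : ℝ))

/-- The restriction from `GL_{m+1}` to `GL_m` in logarithmic coordinates. -/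
def snocZero {m : ℕ} (x : Fin m → ℝ) : Fin (m + 1) → ℝ := Fin.snoc (α := fun _ => ℝ) x 0

@[simp]
theorem snocZero_castSucc {m : ℕ} (x : Fin m → ℝ) (j : Fin m) : snocZero x j.castSucc = x j := by
  simp [snocZero]

@[simp]
theorem snocZero_last {m : ℕ} (x : Fin m → ℝ) : snocZero x (Fin.last m) = 0 := by
  simp [snocZero]

@[simp]
theorem snocZero_apply_zero (x : Fin 0 → ℝ) : snocZero x 0 = 0 :=
  snocZero_last x

theorem sum_snocZero {m : ℕ} (x : Fin m → ℝ) : ∑ j, snocZero x j = ∑ j, x j := by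
  simp [Fin.sum_univ_castSucc]

@[fun_prop]
theorem measurable_snocZero {m : ℕ} : Measurable (snocZero (m := m)) :=
  measurable_pi_lambda _ fun j => Fin.lastCases (by simp)
    (fun i => by simpa using measurable_pi_apply i) j

@[fun_prop]
theorem measurable_lastWeight {m : ℕ} : Measurable (lastWeight (m := m)) := by
  unfold lastWeight
  fun_prop

theorem lastWeight_mul_giventalKernel {m : ℕ} (c : ℂ) (u : Fin (m + 1) → ℝ) (x : Fin m → ℝ) :
    lastWeight u * giventalKernel c u x = baxterKernel c (snocZero x) u := by
  have h : baxterPotential (snocZero x) u =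
      giventalPotential u x + Real.exp (u (Fin.last m)) := by
    rw [baxterPotential, Finset.sum_add_distrib, sum_expNegExt_succ_mul_exp,
      Fin.sum_univ_castSucc, giventalPotential, Finset.sum_add_distrib]
    simp only [snocZero_castSucc, snocZero_last, sub_zero]
    ring
  rw [lastWeight, giventalKernel, baxterKernel, ← Complex.exp_add, sum_snocZero, h]
  push_cast
  ring_nf

theorem giventalKernel_snocZero {m : ℕ} (b : ℂ) (v w : Fin (m + 1) → ℝ) :
    giventalKernel b (snocZero v) w = lastWeight w * baxterKernel b w v := by
  have h : giventalPotential (snocZero v) w =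
      baxterPotential w v + Real.exp (w (Fin.last m)) := by
    rw [giventalPotential, Finset.sum_add_distrib, baxterPotential, Finset.sum_add_distrib,
      sum_expNegExt_succ_mul_exp, Fin.sum_univ_castSucc (f := fun j => Real.exp (w j - _))]
    simp only [Fin.succ_castSucc, Fin.succ_last, snocZero_castSucc, snocZero_last, sub_zero]
    ring
  rw [lastWeight, giventalKernel, baxterKernel, ← Complex.exp_add, sum_snocZero, h]
  push_cast
  ring_nf

theorem lastWeight_mul_givental {m : ℕ} (a : ℕ → ℂ) (u : Fin (m + 1) → ℝ) :
    lastWeight u * givental (m + 1) a u =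
      ∫ x, baxterKernel (a 0) (snocZero x) u * givental m (fun j => a (j + 1)) x := by
  simp only [givental, ← integral_const_mul, ← mul_assoc, lastWeight_mul_giventalKernel]

theorem enorm_lastWeight_mul_giventalAbs {m : ℕ} (a : ℕ → ℂ) (u : Fin (m + 1) → ℝ) :
    ‖lastWeight u‖ₑ * giventalAbs (m + 1) a u =
      ∫⁻ x, ‖baxterKernel (a 0) (snocZero x) u‖ₑ * giventalAbs m (fun j => a (j + 1)) x := by
  rw [giventalAbs, ← lintegral_const_mul _ (by fun_prop)]
  simp only [← mul_assoc, ← enorm_mul, lastWeight_mul_giventalKernel]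

theorem givental_snocZero {m : ℕ} (a : ℕ → ℂ) (v : Fin (m + 1) → ℝ) :
    givental (m + 2) a (snocZero v) = ∫ w, baxterKernel (a 0) w v *
      (lastWeight w * givental (m + 1) (fun j => a (j + 1)) w) := by
  rw [givental]
  simp only [giventalKernel_snocZero, mul_assoc, mul_left_comm (lastWeight _)]

theorem giventalAbs_snocZero {m : ℕ} (a : ℕ → ℂ) (v : Fin (m + 1) → ℝ) :
    giventalAbs (m + 2) a (snocZero v) = ∫⁻ w, ‖baxterKernel (a 0) w v‖ₑ *
      (‖lastWeight w‖ₑ * giventalAbs (m + 1) (fun j => a (j + 1)) w) := by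
  rw [giventalAbs]
  simp only [giventalKernel_snocZero, enorm_mul, mul_assoc, mul_left_comm ‖lastWeight _‖ₑ]

/-- The archimedean `GL_{m+1} × GL_{m+1}` zeta integral in logarithmic coordinates. The complex
variable `s` is absorbed into `a`. -/
def equalRankPairing (m : ℕ) (a a' : ℕ → ℂ) : ℂ :=
  ∫ u, givental (m + 1) a u * (lastWeight u * givental (m + 1) a' u)

/-- The archimedean `GL_{m+1} × GL_m` zeta integral in logarithmic coordinates. The complex
variable `s` is absorbed into `a`. -/
def unequalRankPairing (m : ℕ) (a a' : ℕ → ℂ) : ℂ :=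
  ∫ v, givental (m + 1) a (snocZero v) * givental m a' v

/-- The absolute counterpart of `equalRankPairing`. -/
def equalRankPairingAbs (m : ℕ) (a a' : ℕ → ℂ) : ENNReal :=
  ∫⁻ u, giventalAbs (m + 1) a u * (‖lastWeight u‖ₑ * giventalAbs (m + 1) a' u)

/-- The absolute counterpart of `unequalRankPairing`. -/
def unequalRankPairingAbs (m : ℕ) (a a' : ℕ → ℂ) : ENNReal :=
  ∫⁻ v, giventalAbs (m + 1) a (snocZero v) * giventalAbs m a' v

theorem equalRankPairingAbs_eq (m : ℕ) (a a' : ℕ → ℂ) :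
    equalRankPairingAbs m a a' =
      (∏ j ∈ Finset.range (m + 1), ∫⁻ t, ‖gammaKernel (a j + a' 0) t‖ₑ) *
        unequalRankPairingAbs m a (fun j => a' (j + 1)) := by
  simp only [equalRankPairingAbs, enorm_lastWeight_mul_giventalAbs]
  exact lintegral_giventalAbs_mul_lintegral_baxterKernel (by fun_prop) (by fun_prop)

theorem unequalRankPairingAbs_succ (m : ℕ) (a a' : ℕ → ℂ) :
    unequalRankPairingAbs (m + 1) a a' =
      (∏ k ∈ Finset.range (m + 1), ∫⁻ t, ‖gammaKernel (a' k + a 0) t‖ₑ) *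
        equalRankPairingAbs m a' (fun j => a (j + 1)) := by
  simp only [unequalRankPairingAbs, giventalAbs_snocZero, mul_comm _ (giventalAbs _ a' _)]
  exact lintegral_giventalAbs_mul_lintegral_baxterKernel measurable_id (by fun_prop)

theorem unequalRankPairingAbs_lt_top {m : ℕ} {a a' : ℕ → ℂ}
    (h : ∀ j < m + 1, ∀ k < m, 0 < (a j + a' k).re) : unequalRankPairingAbs m a a' < ⊤ := by
  induction m generalizing a a' with
  | zero =>
    simp [unequalRankPairingAbs, giventalAbs, giventalKernel, giventalPotential, volume_pi]
  | succ m ih =>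
    rw [unequalRankPairingAbs_succ, equalRankPairingAbs_eq]
    refine ENNReal.mul_lt_top (prod_lintegral_gammaKernel_lt_top fun k hk => ?_) <|
      ENNReal.mul_lt_top (prod_lintegral_gammaKernel_lt_top fun k hk => ?_) <|
      ih fun k hk j hj => ?_
    all_goals
      rw [add_comm]
      exact h _ (by omega) _ hk

theorem equalRankPairingAbs_lt_top {m : ℕ} {a a' : ℕ → ℂ}
    (h : ∀ j < m + 1, ∀ k < m + 1, 0 < (a j + a' k).re) : equalRankPairingAbs m a a' < ⊤ := by
  rw [equalRankPairingAbs_eq]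
  exact ENNReal.mul_lt_top (prod_lintegral_gammaKernel_lt_top fun j hj => h j hj 0 m.succ_pos) <|
    unequalRankPairingAbs_lt_top fun j hj k hk => h j hj (k + 1) (by omega)

theorem equalRankPairing_eq {m : ℕ} {a a' : ℕ → ℂ}
    (h : ∀ j < m + 1, ∀ k < m + 1, 0 < (a j + a' k).re) :
    equalRankPairing m a a' = (∏ j ∈ Finset.range (m + 1), GammaR (a j + a' 0)) *
      unequalRankPairing m a (fun j => a' (j + 1)) := by
  simp only [equalRankPairing, lastWeight_mul_givental]
  exact integral_givental_mul_integral_baxterKernel (by fun_prop) (by fun_prop)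
    (measurable_giventalAbs _ _) (enorm_givental_le _ _) (fun j hj => h j hj 0 m.succ_pos)
    (unequalRankPairingAbs_lt_top fun j hj k hk => h j hj (k + 1) (by omega))

theorem unequalRankPairing_succ {m : ℕ} {a a' : ℕ → ℂ}
    (h : ∀ j < m + 2, ∀ k < m + 1, 0 < (a j + a' k).re) :
    unequalRankPairing (m + 1) a a' =
      (∏ k ∈ Finset.range (m + 1), GammaR (a' k + a 0)) *
        equalRankPairing m a' (fun j => a (j + 1)) := by
  have h_comm : ∀ k < m + 1, ∀ j < m + 2, 0 < (a' k + a j).re := fun k hk j hj => by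
    rw [add_comm]
    exact h j hj k hk
  simp only [unequalRankPairing, givental_snocZero, mul_comm _ (givental _ a' _)]
  refine integral_givental_mul_integral_baxterKernel measurable_id (by fun_prop)
    (G := fun w => ‖lastWeight w‖ₑ * giventalAbs (m + 1) (fun j => a (j + 1)) w) (by fun_prop)
    (fun w => ?_) (fun k hk => h_comm k hk 0 (by omega))
    (equalRankPairingAbs_lt_top fun k hk j hj => h_comm k hk (j + 1) (by omega))
  rw [enorm_mul]
  gcongr
  exact enorm_givental_le _ _ _

theorem unequalRankPairing_eq_prod {m : ℕ} {a a' : ℕ → ℂ}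
    (h : ∀ j < m + 1, ∀ k < m, 0 < (a j + a' k).re) :
    unequalRankPairing m a a' =
      ∏ j ∈ Finset.range (m + 1), ∏ k ∈ Finset.range m, GammaR (a j + a' k) := by
  induction m generalizing a a' with
  | zero =>
    simp [unequalRankPairing, givental, giventalKernel, giventalPotential, volume_pi, Measure.real]
  | succ m ih =>
    have h_comm : ∀ k < m + 1, ∀ j < m + 2, 0 < (a' k + a j).re := fun k hk j hj => by
      rw [add_comm]
      exact h j hj k hk
    rw [unequalRankPairing_succ h,
      equalRankPairing_eq fun k hk j hj => h_comm k hk (j + 1) (by omega),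
      ih fun k hk j hj => h_comm k hk (j + 2) (by omega), Finset.prod_comm]
    simp only [Finset.prod_range_succ' _ (m + 1), Finset.prod_range_succ' _ m,
      Finset.prod_mul_distrib, add_comm (a' _)]
    ring

theorem equalRankPairing_eq_prod {m : ℕ} {a a' : ℕ → ℂ}
    (h : ∀ j < m + 1, ∀ k < m + 1, 0 < (a j + a' k).re) :
    equalRankPairing m a a' =
      ∏ j ∈ Finset.range (m + 1), ∏ k ∈ Finset.range (m + 1), GammaR (a j + a' k) := by
  rw [equalRankPairing_eq h,
    unequalRankPairing_eq_prod fun j hj k hk => h j hj (k + 1) (by omega)]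
  simp only [Finset.prod_range_succ' _ m, Finset.prod_mul_distrib]
  ring

/-! ### Logarithmic coordinates -/

@[simp]
theorem extR_coe {k : ℕ} (t : Fin k → ℝ) (j : Fin k) : extR t j = t j := by
  simp [extR]

theorem integral_posSet_eq_integral_exp_smul {E : Type*} [NormedAddCommGroup E] [NormedSpace ℝ E]
    {k : ℕ} (f : (Fin k → ℝ) → E) :
    ∫ t in posSet k, f t =
      ∫ x : Fin k → ℝ, (∏ j, Real.exp (x j)) • f (fun j => Real.exp (x j)) := by
  let exps (x : Fin k → ℝ) (j : Fin k) : ℝ := Real.exp (x j)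
  let exps' (x : Fin k → ℝ) : (Fin k → ℝ) →L[ℝ] (Fin k → ℝ) :=
    .pi fun j => (Real.exp (x j) • .id ℝ ℝ) ∘L .proj j
  have h_deriv (x : Fin k → ℝ) : HasFDerivAt exps (exps' x) x :=
    hasFDerivAt_pi.2 fun j => (hasFDerivAt_apply j x).exp
  have h_det (x : Fin k → ℝ) : |(exps' x).det| = ∏ j, Real.exp (x j) := by
    have h : (exps' x).det = ∏ j, Real.exp (x j) := by
      simp [exps', ContinuousLinearMap.det_pi, -ContinuousLinearMap.coe_pi,
        -ContinuousLinearMap.smul_comp]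
    rw [h, abs_of_pos (Finset.prod_pos fun j _ => Real.exp_pos _)]
  have h_inj : Function.Injective exps := fun x y h =>
    funext fun j => Real.exp_injective (congrFun h j)
  have h_image : exps '' Set.univ = posSet k := by
    ext t
    refine ⟨?_, fun ht => ⟨fun j => Real.log (t j), trivial, funext fun j => Real.exp_log (ht j)⟩⟩
    rintro ⟨x, -, rfl⟩ j
    exact Real.exp_pos _
  rw [← h_image, integral_image_eq_integral_abs_det_fderiv_smul volume MeasurableSet.univ
    (fun x _ => (h_deriv x).hasFDerivWithinAt) h_inj.injOn, setIntegral_univ]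
  simp only [h_det, exps]

theorem integral_posSet_div_prod {k : ℕ} (f : (Fin k → ℝ) → ℂ) :
    ∫ t in posSet k, f t / ∏ j, (t j : ℂ) = ∫ x : Fin k → ℝ, f fun j => Real.exp (x j) := by
  rw [integral_posSet_eq_integral_exp_smul]
  refine integral_congr_ae (.of_forall fun x => ?_)
  simp only [real_smul, ofReal_prod]
  exact mul_div_cancel₀ _ (Finset.prod_ne_zero_iff.2 fun j _ => by simp)

section AbelSummation

variable {R : Type*} [CommRing R]

theorem sum_succ_mul_sub (m : ℕ) (u : Fin (m + 1) → R) :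
    ∑ j : Fin m, ((j : ℕ) + 1 : R) * (u j.castSucc - u j.succ) =
      ∑ j : Fin m, u j.castSucc - m * u (Fin.last m) := by
  induction m with
  | zero => simp
  | succ m ih =>
    have h := ih fun j => u j.castSucc
    rw [Fin.sum_univ_castSucc, Fin.sum_univ_castSucc (f := fun j => u j.castSucc)]
    simp only [Fin.val_castSucc, Fin.succ_castSucc, h, Fin.val_last, Fin.succ_last]
    push_cast
    ring

theorem sum_sub_mul_sub (m : ℕ) (u : Fin (m + 1) → R) :
    ∑ j : Fin m, (m - (j : ℕ) : R) * (u j.castSucc - u j.succ) =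
      m * u 0 - ∑ j : Fin m, u j.succ := by
  have h := sum_succ_mul_sub m u
  have h_sum := (Fin.sum_univ_succ u).symm.trans (Fin.sum_univ_castSucc u)
  have h_split : ∑ j : Fin m, (m - (j : ℕ) : R) * (u j.castSucc - u j.succ) =
      (m + 1) * (∑ j : Fin m, u j.castSucc - ∑ j : Fin m, u j.succ) -
        ∑ j : Fin m, ((j : ℕ) + 1 : R) * (u j.castSucc - u j.succ) := by
    rw [← Finset.sum_sub_distrib, Finset.mul_sum, ← Finset.sum_sub_distrib]
    exact Finset.sum_congr rfl fun j _ => by ring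
  rw [h_split, h]
  linear_combination -(m : R) * h_sum

theorem sum_sub_val_mul_two (m : ℕ) : (∑ j : Fin m, (m - (j : ℕ) : R)) * 2 = m * (m + 1) := by
  induction m with
  | zero => simp
  | succ m ih =>
    rw [Fin.sum_univ_succ, add_mul]
    simp only [Fin.val_zero, Fin.val_succ, Nat.cast_add, Nat.cast_one, add_sub_add_right_eq_sub, ih]
    push_cast
    ring

end AbelSummation

/-! ### The Whittaker function as Givental's integral -/

theorem giventalKernel_add_right {m : ℕ} (b c : ℂ) (u : Fin (m + 1) → ℝ) (x : Fin m → ℝ) :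
    giventalKernel (b + c) u x * cexp (c / 2 * (∑ j, x j : ℝ)) =
      cexp (c / 2 * (∑ j, u j : ℝ)) * giventalKernel b u x := by
  rw [giventalKernel, giventalKernel, ← Complex.exp_add, ← Complex.exp_add]
  push_cast
  ring_nf

theorem givental_add_const (n : ℕ) (a : ℕ → ℂ) (c : ℂ) (u : Fin n → ℝ) :
    givental n (fun j => a j + c) u = cexp (c / 2 * (∑ j, u j : ℝ)) * givental n a u := by
  induction n generalizing a with
  | zero => simp [givental]
  | succ n ih =>
    simp only [givental, ← integral_const_mul, ih, ← mul_assoc, giventalKernel_add_right]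

theorem tildeA_add_one (n : ℕ) (a : ℕ → ℂ) :
    tildeA (n + 1) a = fun j => a (j + 1) + a 0 / n := by
  funext j
  simp [tildeA]

theorem sumA_tildeA_add_one {n : ℕ} (hn : n ≠ 0) (a : ℕ → ℂ) :
    sumA n (tildeA (n + 1) a) = sumA (n + 1) a := by
  have hn' : (n : ℂ) ≠ 0 := by exact_mod_cast hn
  simp [tildeA_add_one, sumA, Finset.sum_range_succ' a, Finset.sum_add_distrib,
    mul_div_cancel₀ _ hn']

section Recursion

variable {N : ℕ} {y : ℕ → ℝ} (u : Fin (N + 1) → ℝ) (x : Fin N → ℝ)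

/-- The variables `t_j` of the recursion defining `WhittAr`, as functions of the coordinates `u` of
the outer and `x` of the inner Whittaker function. -/
def recursionVar (j : Fin N) : ℝ := Real.exp (u j.succ - x j) / Real.pi

theorem integral_posSet_div_prod_eq_integral_recursionVar (f : (Fin N → ℝ) → ℂ) :
    ∫ t in posSet N, f t / ∏ j, (t j : ℂ) = ∫ x, f (recursionVar u x) := by
  rw [integral_posSet_div_prod,
    ← integral_sub_left_eq_self _ volume fun j : Fin N => u j.succ - Real.log Real.pi]
  refine integral_congr_ae (.of_forall fun x => congrArg f (funext fun j => ?_))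
  rw [recursionVar, Pi.sub_apply, sub_right_comm, Real.exp_sub, Real.exp_log Real.pi_pos]

theorem ofReal_recursionVar_cpow (j : Fin N) (w : ℂ) :
    ((recursionVar u x j : ℝ) : ℂ) ^ w = cexp (w * (u j.succ - x j - Real.log Real.pi)) := by
  have h : recursionVar u x j = Real.exp (u j.succ - x j - Real.log Real.pi) := by
    rw [recursionVar, Real.exp_sub _ (Real.log _), Real.exp_log Real.pi_pos]
  rw [h, ofReal_exp_cpow]
  push_cast
  rfl

theorem ofReal_pi_mul_recursionVar_cpow (j : Fin N) (w : ℂ) :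
    ((Real.pi * recursionVar u x j : ℝ) : ℂ) ^ w = cexp (w * (u j.succ - x j)) := by
  rw [recursionVar, mul_div_cancel₀ _ Real.pi_ne_zero, ofReal_exp_cpow]
  push_cast
  rfl

theorem mul_sqrt_recursionVar_div {m : ℕ} (u : Fin (m + 2) → ℝ) (x : Fin (m + 1) → ℝ) (j : Fin m) :
    Real.exp ((u j.succ.castSucc - u j.succ.succ) / 2) *
        Real.sqrt (recursionVar u x j.succ / recursionVar u x j.castSucc) =
      Real.exp ((x j.castSucc - x j.succ) / 2) := by
  rw [recursionVar, recursionVar, div_div_div_cancel_right₀ Real.pi_ne_zero, ← Real.exp_sub,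
    Real.sqrt_eq_rpow, ← Real.exp_mul, ← Real.exp_add, Fin.succ_castSucc]
  ring_nf

theorem neg_sq_mul_recursionVar_sub_inv {j : Fin N}
    (hy : y j = Real.exp ((u j.castSucc - u j.succ) / 2)) :
    -(Real.pi * y j) ^ 2 * recursionVar u x j - 1 / recursionVar u x j =
      -(Real.pi * (Real.exp (u j.castSucc - x j) + Real.exp (x j - u j.succ))) := by
  have h_sq : y j ^ 2 * Real.exp (u j.succ - x j) = Real.exp (u j.castSucc - x j) := by
    rw [hy, ← Real.exp_nat_mul, ← Real.exp_add]
    push_cast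
    ring_nf
  have h_inv : Real.exp (x j - u j.succ) * Real.exp (u j.succ - x j) = 1 := by
    rw [← Real.exp_add, sub_add_sub_cancel, sub_self, Real.exp_zero]
  rw [recursionVar, ← h_sq, eq_inv_of_mul_eq_one_left h_inv]
  field_simp
  ring

theorem sum_recursion_exponent (hN : N ≠ 0) (b L : ℂ) :
    ∑ j : Fin N, (((N - (j : ℕ) : ℂ) * b / N) * (L + (u j.castSucc - u j.succ) / 2) +
        ((N + 1) * b / (2 * N)) * (u j.succ - x j - L)) =
      b / 2 * (∑ j, u j - ∑ j, x j : ℝ) + -(b / N) / 2 * (∑ j, x j : ℝ) := by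
  have hN' : (N : ℂ) ≠ 0 := by exact_mod_cast hN
  have h_abel := sum_sub_mul_sub N fun j => (u j : ℂ)
  have h_gauss := sum_sub_val_mul_two (R := ℂ) N
  have h_expand (j : Fin N) :
      (((N - (j : ℕ) : ℂ) * b / N) * (L + (u j.castSucc - u j.succ) / 2) +
          ((N + 1) * b / (2 * N)) * (u j.succ - x j - L)) =
        b * L / N * (N - (j : ℕ)) + b / (2 * N) * ((N - (j : ℕ)) * (u j.castSucc - u j.succ)) +
          (N + 1) * b / (2 * N) * u j.succ - (N + 1) * b / (2 * N) * x j -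
          (N + 1) * b / (2 * N) * L := by
    ring
  simp only [h_expand, Finset.sum_add_distrib, Finset.sum_sub_distrib, ← Finset.mul_sum, h_abel,
    Finset.sum_const, Finset.card_univ, Fintype.card_fin, nsmul_eq_mul, Fin.sum_univ_succ u]
    at h_gauss ⊢
  push_cast
  field_simp
  linear_combination b * L * h_gauss

theorem prod_recursion_factor (hN : N ≠ 0)
    (hy : ∀ j : Fin N, y j = Real.exp ((u j.castSucc - u j.succ) / 2)) (b : ℂ) :
    ∏ j : Fin N,
        (cexp (-(Real.pi * y j) ^ 2 * recursionVar u x j - 1 / recursionVar u x j : ℝ) *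
          ((Real.pi * y j : ℝ) : ℂ) ^ (((N - j : ℕ) : ℂ) * b / N) *
          ((recursionVar u x j : ℝ) : ℂ) ^ (((N + 1 : ℕ) : ℂ) * b / (2 * N))) =
      giventalKernel b u x * cexp (-(b / N) / 2 * (∑ j, x j : ℝ)) := by
  have h_base (j : Fin N) (w : ℂ) : ((Real.pi * y j : ℝ) : ℂ) ^ w =
      cexp (w * (Real.log Real.pi + (u j.castSucc - u j.succ) / 2)) := by
    have h : Real.pi * y j = Real.exp (Real.log Real.pi + (u j.castSucc - u j.succ) / 2) := by
      rw [Real.exp_add, Real.exp_log Real.pi_pos, hy]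
    rw [h, ofReal_exp_cpow]
    push_cast
    rfl
  have h_sum := sum_recursion_exponent u x hN b (Real.log Real.pi)
  simp only [neg_sq_mul_recursionVar_sub_inv u x (hy _), h_base, ofReal_recursionVar_cpow,
    ← Complex.exp_add, ← Complex.exp_sum, giventalKernel, giventalPotential, add_assoc,
    Nat.cast_sub (Fin.is_lt _).le]
  rw [Finset.sum_add_distrib, ← ofReal_sum]
  push_cast at h_sum ⊢
  rw [h_sum, Finset.sum_neg_distrib, ← Finset.mul_sum]
  ring_nf

end Recursion

theorem WhittAr_add_three_eq_integral {n : ℕ} (a : ℕ → ℂ) {y : ℕ → ℝ} {u : Fin (n + 3) → ℝ}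
    (hy : ∀ j : Fin (n + 2), y j = Real.exp ((u j.castSucc - u j.succ) / 2)) :
    WhittAr (n + 3) a y = ∫ x : Fin (n + 2) → ℝ,
      WhittAr (n + 2) (tildeA (n + 3) a) (fun j => y (j + 1) *
          Real.sqrt (extR (recursionVar u x) (j + 1) / extR (recursionVar u x) j)) *
        (giventalKernel (a 0) u x * cexp (-(a 0 / (n + 2 : ℕ)) / 2 * (∑ j, x j : ℝ))) *
        cexp (-(sumA (n + 3) a) / 2 * (u (Fin.last _) - x (Fin.last _))) := by
  simp only [WhittAr, Finset.prod_range, extR_coe, ← div_eq_mul_inv]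
  rw [integral_posSet_div_prod_eq_integral_recursionVar u]
  refine integral_congr_ae (.of_forall fun x => ?_)
  have h_last : extR (recursionVar u x) (n + 1) = recursionVar u x (Fin.last _) :=
    extR_coe _ (Fin.last (n + 1))
  simp only [h_last, ofReal_pi_mul_recursionVar_cpow]
  rw [← prod_recursion_factor u x (by omega) hy]
  rfl

theorem givental_one (a : ℕ → ℂ) (u : Fin 1 → ℝ) : givental 1 a u = cexp (a 0 / 2 * u 0) := by
  simp [givental, giventalKernel, giventalPotential, volume_pi, Measure.real]

theorem givental_two (a : ℕ → ℂ) (u : Fin 2 → ℝ) :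
    givental 2 a u = ∫ x : ℝ, cexp (a 0 / 2 * (u 0 + u 1 - x) + a 1 / 2 * x -
      (Real.pi * (Real.exp (u 0 - x) + Real.exp (x - u 1)) : ℝ)) := by
  refine ((volume_preserving_funUnique (Fin 1) ℝ).symm.integral_comp'
    (g := fun x => giventalKernel (a 0) u x * givental 1 (fun j => a (j + 1)) x)).symm.trans ?_
  refine integral_congr_ae (.of_forall fun x => ?_)
  simp only [givental_one, giventalKernel, giventalPotential, Nat.reduceAdd, Fin.sum_univ_two,
    Finset.univ_unique, Fin.default_eq_zero, Finset.sum_singleton, Fin.castSucc_zero,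
    Fin.succ_zero_eq_one, MeasurableEquiv.funUnique_symm_apply, uniqueElim_const,
    ← Complex.exp_add]
  push_cast
  ring_nf

theorem WhittAr_two_eq_givental (a : ℕ → ℂ) {y : ℕ → ℝ} {u : Fin 2 → ℝ}
    (hy : y 0 = Real.exp ((u 0 - u 1) / 2)) :
    WhittAr 2 a y = cexp (-(sumA 2 a) / 2 * u 1) * givental 2 a u := by
  rw [WhittAr, BesselK, integral_Ioi_eq_integral_exp_smul, givental_two,
    ← integral_sub_left_eq_self _ volume ((u 0 + u 1) / 2), ← integral_const_mul,
    ← integral_const_mul, ← integral_const_mul]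
  refine integral_congr_ae (.of_forall fun x => ?_)
  have h_left : y 0 * Real.exp ((u 0 + u 1) / 2 - x) = Real.exp (u 0 - x) := by
    rw [hy, ← Real.exp_add]
    ring_nf
  have h_right : y 0 / Real.exp ((u 0 + u 1) / 2 - x) = Real.exp (x - u 1) := by
    rw [hy, ← Real.exp_sub]
    ring_nf
  have h_half (p q r : ℂ) : 2 * p * (1 / 2 * (q * r)) = p * q * r := by ring
  simp only [← h_left, ← h_right]
  rw [real_smul, mul_div_cancel₀ _ (by simp), hy, ofReal_exp_cpow, ofReal_exp_cpow, h_half,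
    ← Complex.exp_add, ← Complex.exp_add, ← Complex.exp_add]
  simp only [sumA, Finset.sum_range_succ, Finset.sum_range_zero]
  push_cast
  ring_nf

theorem WhittAr_eq_givental (n : ℕ) (a : ℕ → ℂ) {y : ℕ → ℝ} {u : Fin (n + 1) → ℝ}
    (hy : ∀ j : Fin n, y j = Real.exp ((u j.castSucc - u j.succ) / 2)) :
    WhittAr (n + 1) a y =
      cexp (-(sumA (n + 1) a) / 2 * u (Fin.last n)) * givental (n + 1) a u := by
  induction n using Nat.twoStepInduction generalizing a y with
  | zero =>
    simp [WhittAr, givental_one, sumA, ← Complex.exp_add, neg_div]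
  | one => exact WhittAr_two_eq_givental a (hy 0)
  | more n _ ih =>
    rw [WhittAr_add_three_eq_integral a hy, givental, ← integral_const_mul]
    refine integral_congr_ae (.of_forall fun x => ?_)
    have hy_tail (j : Fin (n + 1)) : y (j + 1) *
        Real.sqrt (extR (recursionVar u x) (j + 1) / extR (recursionVar u x) j) =
        Real.exp ((x j.castSucc - x j.succ) / 2) := by
      rw [← mul_sqrt_recursionVar_div u x j, ← hy, ← extR_coe (recursionVar u x) j.succ,
        ← extR_coe (recursionVar u x) j.castSucc]
      rfl
    have h_shift : cexp (a 0 / (n + 2 : ℕ) / 2 * (∑ j, x j : ℝ)) *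
        cexp (-(a 0 / (n + 2 : ℕ)) / 2 * (∑ j, x j : ℝ)) = 1 := by
      rw [← Complex.exp_add, ← Complex.exp_zero]
      ring_nf
    have h_last : cexp (-(sumA (n + 3) a) / 2 * x (Fin.last _)) *
        cexp (-(sumA (n + 3) a) / 2 * (u (Fin.last _) - x (Fin.last _))) =
        cexp (-(sumA (n + 3) a) / 2 * u (Fin.last _)) := by
      rw [← Complex.exp_add]
      ring_nf
    beta_reduce
    rw [ih _ hy_tail, sumA_tildeA_add_one (by omega), tildeA_add_one, givental_add_const, ← h_last]
    linear_combination (cexp (-(sumA (n + 3) a) / 2 * x (Fin.last _)) *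
      cexp (-(sumA (n + 3) a) / 2 * (u (Fin.last _) - x (Fin.last _))) *
      giventalKernel (a 0) u x * givental (n + 2) (fun j => a (j + 1)) x) * h_shift

/-! ### The zeta integral in logarithmic coordinates -/

/-- The linear map from the coordinates `u` of Givental's integral to the logarithmic torus
coordinates `log y_j = (u_j - u_{j+1}) / 2`, where the tuple `u` is continued by `0`. -/
def halfDiff (k : ℕ) : (Fin k → ℝ) →ₗ[ℝ] (Fin k → ℝ) where
  toFun u j := (snocZero u j.castSucc - snocZero u j.succ) / 2
  map_add' u v := by
    have h (j) : snocZero (u + v) j = snocZero u j + snocZero v j := by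
      refine Fin.lastCases ?_ (fun i => ?_) j <;> simp
    funext j
    simp only [h, Pi.add_apply]
    ring
  map_smul' c u := by
    have h (j) : snocZero (c • u) j = c * snocZero u j := by
      refine Fin.lastCases ?_ (fun i => ?_) j <;> simp
    funext j
    simp only [h, Pi.smul_apply, smul_eq_mul, RingHom.id_apply]
    ring

theorem halfDiff_apply {k : ℕ} (u : Fin k → ℝ) (j : Fin k) :
    halfDiff k u j = (u j - snocZero u j.succ) / 2 := by
  simp [halfDiff]

theorem halfDiff_castSucc {n : ℕ} (u : Fin (n + 1) → ℝ) (j : Fin n) :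
    halfDiff (n + 1) u j.castSucc = (u j.castSucc - u j.succ) / 2 := by
  simp [halfDiff_apply, Fin.succ_castSucc, -Fin.castSucc_succ]

theorem halfDiff_last {n : ℕ} (u : Fin (n + 1) → ℝ) :
    halfDiff (n + 1) u (Fin.last n) = u (Fin.last n) / 2 := by
  simp [halfDiff_apply]

theorem sum_succ_mul_halfDiff {k : ℕ} (u : Fin k → ℝ) :
    ∑ j : Fin k, ((j : ℕ) + 1) * halfDiff k u j = (∑ j, u j) / 2 := by
  have h := sum_succ_mul_sub k (snocZero u)
  simp only [snocZero_castSucc, snocZero_last, mul_zero, sub_zero] at h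
  simp only [halfDiff_apply, ← mul_div_assoc, ← Finset.sum_div, h]

theorem det_halfDiff (k : ℕ) : LinearMap.det (halfDiff k) = (1 / 2) ^ k := by
  have h_single {i j : Fin k} (h : j ≤ i) : snocZero (Pi.single j (1 : ℝ)) i.succ = 0 := by
    obtain ⟨l, hl⟩ | hi := i.succ.eq_castSucc_or_eq_last
    · have hlj : l ≠ j := by
        rintro rfl
        have := congrArg Fin.val hl
        simp only [Fin.val_succ, Fin.val_castSucc] at this
        omega
      rw [hl, snocZero_castSucc, Pi.single_eq_of_ne hlj]
    · rw [hi, snocZero_last]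
  rw [← LinearMap.det_toMatrix', Matrix.det_of_isUpperTriangular]
  · simp [LinearMap.toMatrix'_apply, halfDiff_apply, h_single le_rfl]
  · intro i j (hij : j < i)
    simp [LinearMap.toMatrix'_apply, halfDiff_apply, h_single hij.le, hij.ne']

theorem integral_comp_halfDiff {E : Type*} [NormedAddCommGroup E] [NormedSpace ℝ E] {k : ℕ}
    (f : (Fin k → ℝ) → E) : ∫ u, f (halfDiff k u) = (2 : ℝ) ^ k • ∫ v, f v := by
  have h_det : LinearMap.det (halfDiff k) ≠ 0 := by
    rw [det_halfDiff]
    positivity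
  have h_emb : MeasurableEmbedding (halfDiff k) :=
    ((halfDiff k).equivOfDetNeZero h_det).toContinuousLinearEquiv.toHomeomorph.measurableEmbedding
  rw [← h_emb.integral_map, Real.map_linearMap_volume_pi_eq_smul_volume_pi h_det,
    integral_smul_measure, det_halfDiff, ENNReal.toReal_ofReal (abs_nonneg _)]
  simp

theorem extR_exp_halfDiff_last {n : ℕ} (u : Fin (n + 1) → ℝ) :
    extR (fun j => Real.exp (halfDiff (n + 1) u j)) n = Real.exp (u (Fin.last n) / 2) :=
  (extR_coe _ (Fin.last n)).trans (by rw [halfDiff_last])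

theorem WhittAhat_eq_givental (n : ℕ) (a : ℕ → ℂ) (u : Fin (n + 1) → ℝ) :
    WhittAhat (n + 1) a (extR fun j => Real.exp (halfDiff (n + 1) u j)) =
      givental (n + 1) a u := by
  have h_init (j : Fin n) : extR (fun j => Real.exp (halfDiff (n + 1) u j)) j =
      Real.exp ((u j.castSucc - u j.succ) / 2) :=
    (extR_coe _ j.castSucc).trans (by rw [halfDiff_castSucc])
  have h_cancel : cexp (sumA (n + 1) a * (u (Fin.last n) / 2 : ℝ)) *
      cexp (-(sumA (n + 1) a) / 2 * u (Fin.last n)) = 1 := by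
    rw [← Complex.exp_add, ← Complex.exp_zero]
    push_cast
    ring_nf
  rw [WhittAhat, Nat.add_sub_cancel, extR_exp_halfDiff_last, ofReal_exp_cpow,
    WhittAr_eq_givental n a h_init, ← mul_assoc, h_cancel, one_mul]

theorem zetaGLGL_eq_equalRankPairing (n : ℕ) (a a' : ℕ → ℂ) (s : ℂ) :
    zetaGLGL (n + 1) a a' s = equalRankPairing n (fun j => a j + s) a' := by
  have h_two : (2 : ℂ) ^ (n + 1) = ((2 ^ (n + 1) : ℝ) : ℂ) := by
    push_cast
    rfl
  simp only [zetaGLGL, Finset.prod_range, Finset.prod_div_distrib, ← mul_div_assoc, extR_coe]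
  rw [integral_posSet_div_prod, h_two, ← real_smul, ← integral_comp_halfDiff, equalRankPairing]
  refine integral_congr_ae (.of_forall fun u => ?_)
  have h_sq : extR (fun j => Real.exp (halfDiff (n + 1) u j)) n ^ 2 =
      Real.exp (u (Fin.last n)) := by
    rw [extR_exp_halfDiff_last, ← Real.exp_nat_mul]
    push_cast
    ring_nf
  have h_sum : ∑ j : Fin (n + 1), ((j + 1 : ℕ) : ℂ) * s * (halfDiff (n + 1) u j : ℂ) =
      s / 2 * (∑ j, u j : ℝ) := by
    have h := congrArg (fun r : ℝ => s * (r : ℂ)) (sum_succ_mul_halfDiff u)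
    push_cast at h ⊢
    simp only [mul_right_comm _ s, ← Finset.sum_mul]
    linear_combination h
  simp only [WhittAhat_eq_givental, h_sq, ofReal_exp_cpow, ← Complex.exp_sum, h_sum,
    givental_add_const, lastWeight, Nat.add_sub_cancel, ofReal_neg]
  ring

theorem gl_gl_zeta_eq_Lfactor_general (n : ℕ) (hn : n ≠ 0) (a a' : ℕ → ℂ) (s : ℂ)
    (h : ∀ j < n, ∀ k < n, 0 < (s + a j + a' k).re) :
    zetaGLGL n a a' s =
      ∏ j ∈ Finset.range n, ∏ k ∈ Finset.range n, GammaR (s + a j + a' k) := by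
  obtain ⟨m, rfl⟩ := Nat.exists_eq_succ_of_ne_zero hn
  simp only [add_comm s] at h ⊢
  rw [zetaGLGL_eq_equalRankPairing, equalRankPairing_eq_prod h]

/-- The archimedean `GL_n × GL_n` zeta integral equals its local `L`-factor
(Theorem 2.1(2) of Ishii–Stade). -/
theorem gl_gl_zeta_eq_Lfactor (n : ℕ) (hn : 2 ≤ n)
    (a a' : ℕ → ℂ) (ha : ∀ j < n, (a j).re = 0) (ha' : ∀ k < n, (a' k).re = 0)
    (s : ℂ) (hs : 0 < s.re) :
    zetaGLGL n a a' s =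
      ∏ j ∈ Finset.range n, ∏ k ∈ Finset.range n, GammaR (s + a j + a' k) :=
  gl_gl_zeta_eq_Lfactor_general n (by omega) a a' s fun j hj k hk => by
    simpa [ha j hj, ha' k hk] using hs

end
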